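/- arXiv:2111.10851 — 2 statements merged into one kernel-verified Lean document; each statement's English description precedes it below -/
import Mathlib

section
/- If I is an unmixed ass-decomposable monomial ideal in R = K[x_1,…,x_n], then R/I is Cohen-Macaulay. -/
open MvPolynomial

namespace Paper

/-- The depth of a module `M` with respect to an ideal `J`: the supremum of lengths of
`M`-regular sequences consisting of elements of `J`. -/
noncomputable def depth {A : Type} [CommRing A] (J : Ideal A)
    (M : Type) [AddCommGroup M] [Module A M] : ℕ∞ :=
  sSup {k : ℕ∞ | ∃ rs : List A, (rs.length : ℕ∞) = k ∧ (∀ r ∈ rs, r ∈ J) ∧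
    RingTheory.Sequence.IsRegular M rs}

/-- The irrelevant maximal ideal `𝔪 = (x_1, …, x_n)` of `K[x_1, …, x_n]`. -/
noncomputable def mIdeal (n : ℕ) (K : Type) [Field K] : Ideal (MvPolynomial (Fin n) K) :=
  Ideal.span (Set.range X)

/-- The Krull dimension of a module, `dim M = dim (A / ann M)`. -/
noncomputable def mdim (A : Type) [CommRing A] (M : Type) [AddCommGroup M] [Module A M] :
    WithBot ℕ∞ :=
  ringKrullDim (A ⧸ Module.annihilator A M)

/-- A module over `K[x_1, …, x_n]` is Cohen-Macaulay if its depth with respect to the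
irrelevant maximal ideal equals its Krull dimension. -/
def IsCMMod (n : ℕ) (K : Type) [Field K] (M : Type) [AddCommGroup M]
    [Module (MvPolynomial (Fin n) K) M] : Prop :=
  (depth (mIdeal n K) M : WithBot ℕ∞) = mdim (MvPolynomial (Fin n) K) M

/-- A module over `K[x_1, …, x_n]` is sequentially Cohen-Macaulay if it admits a finite
filtration `0 = M_0 ⊂ M_1 ⊂ ⋯ ⊂ M_r = M` with Cohen-Macaulay quotients of strictly
increasing dimensions. -/
def IsSeqCMMod (n : ℕ) (K : Type) [Field K] (M : Type) [AddCommGroup M]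
    [Module (MvPolynomial (Fin n) K) M] : Prop :=
  ∃ (r : ℕ) (f : Fin (r + 1) → Submodule (MvPolynomial (Fin n) K) M),
    f 0 = ⊥ ∧ f (Fin.last r) = ⊤ ∧ StrictMono f ∧
    (∀ i : Fin r,
      IsCMMod n K (↥(f i.succ) ⧸ Submodule.comap (f i.succ).subtype (f i.castSucc))) ∧
    ∀ i j : Fin r, i < j →
      mdim (MvPolynomial (Fin n) K)
          (↥(f i.succ) ⧸ Submodule.comap (f i.succ).subtype (f i.castSucc)) <
        mdim (MvPolynomial (Fin n) K)
          (↥(f j.succ) ⧸ Submodule.comap (f j.succ).subtype (f j.castSucc))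

/-- Height of an ideal (meaningful for prime ideals). -/
noncomputable def htP {A : Type} [CommRing A] (𝔭 : Ideal A) : ℕ∞ :=
  ⨆ (h : 𝔭.IsPrime), Order.height (⟨𝔭, h⟩ : PrimeSpectrum A)

/-- The big height of `I`: the maximum of the heights of the associated primes of `I`. -/
noncomputable def bigh {A : Type} [CommRing A] (I : Ideal A) : ℕ∞ :=
  ⨆ 𝔭 ∈ associatedPrimes A (A ⧸ I), htP 𝔭

/-- A monomial ideal: an ideal generated by monomials. -/
def IsMonomialIdeal {n : ℕ} {K : Type} [Field K] (I : Ideal (MvPolynomial (Fin n) K)) : Prop :=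
  ∃ S : Set (Fin n →₀ ℕ), I = Ideal.span ((fun a => monomial a (1 : K)) '' S)

/-- A squarefree monomial ideal: an ideal generated by squarefree monomials. -/
def IsSquarefreeMonomialIdeal {n : ℕ} {K : Type} [Field K]
    (I : Ideal (MvPolynomial (Fin n) K)) : Prop :=
  ∃ S : Set (Fin n →₀ ℕ), (∀ a ∈ S, ∀ i, a i ≤ 1) ∧
    I = Ideal.span ((fun a => monomial a (1 : K)) '' S)

/-- An ideal `I` is unmixed if `dim A/I = dim A/𝔭` for every associated prime `𝔭` of `I`. -/
def IsUnmixed {A : Type} [CommRing A] (I : Ideal A) : Prop :=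
  ∀ 𝔭 ∈ associatedPrimes A (A ⧸ I), ringKrullDim (A ⧸ I) = ringKrullDim (A ⧸ 𝔭)

/-- ass-decomposable ideals: `I` is ass-decomposable if it is primary, or there are a
variable `x_i ∉ √I` and `k ≥ 1` with `ass(I + (x_i^k)) = {𝔭 ∈ ass(I) : x_i ∈ 𝔭}` such
that `I + (x_i^k)` and `I : x_i^k` are both ass-decomposable. -/
inductive IsAssDecomposable {n : ℕ} {K : Type} [Field K] :
    Ideal (MvPolynomial (Fin n) K) → Prop
  | primary {I : Ideal (MvPolynomial (Fin n) K)} (h : I.IsPrimary) : IsAssDecomposable I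
  | step {I : Ideal (MvPolynomial (Fin n) K)} (i : Fin n) (k : ℕ) (hk : 1 ≤ k)
      (hx : X i ∉ I.radical)
      (hass : associatedPrimes (MvPolynomial (Fin n) K)
          (MvPolynomial (Fin n) K ⧸ (I + Ideal.span {(X i : MvPolynomial (Fin n) K) ^ k})) =
        {𝔭 ∈ associatedPrimes (MvPolynomial (Fin n) K) (MvPolynomial (Fin n) K ⧸ I) |
          (X i : MvPolynomial (Fin n) K) ∈ 𝔭})
      (h1 : IsAssDecomposable (I + Ideal.span {(X i : MvPolynomial (Fin n) K) ^ k}))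
      (h2 : IsAssDecomposable (I.colon (Ideal.span {(X i : MvPolynomial (Fin n) K) ^ k}))) :
      IsAssDecomposable I

section Helpers

/-- Ideal-theoretic form of `rs` is a weakly regular sequence on `A / I`. -/
def WR {A : Type} [CommRing A] : Ideal A → List A → Prop
  | _, [] => True
  | I, r :: rs => (∀ f, r * f ∈ I → f ∈ I) ∧ WR (I ⊔ Ideal.span {r}) rs

theorem mem_col {A : Type} [CommRing A] {I : Ideal A} {x f : A} :
    f ∈ I.colon (Ideal.span {x} : Ideal A) ↔ x * f ∈ I := by
  rw [Submodule.mem_colon]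
  constructor
  · intro h
    have := h x (Ideal.mem_span_singleton_self x)
    rwa [smul_eq_mul, mul_comm] at this
  · intro h s hs
    obtain ⟨c, rfl⟩ := Ideal.mem_span_singleton'.1 hs
    have : f • (c * x) = c * (x * f) := by rw [smul_eq_mul]; ring
    rw [this]
    exact I.mul_mem_left _ h

theorem mem_supsp {A : Type} [CommRing A] {I : Ideal A} {x f : A} :
    f ∈ I ⊔ Ideal.span {x} ↔ ∃ g ∈ I, ∃ h, f = g + x * h := by
  rw [Submodule.mem_sup]
  constructor
  · rintro ⟨g, hg, z, hz, rfl⟩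
    obtain ⟨c, rfl⟩ := Ideal.mem_span_singleton'.1 hz
    exact ⟨g, hg, c, by ring⟩
  · rintro ⟨g, hg, h, rfl⟩
    exact ⟨g, hg, x * h, Ideal.mem_span_singleton'.2 ⟨h, by ring⟩, rfl⟩

theorem WR_top {A : Type} [CommRing A] (rs : List A) : WR (⊤ : Ideal A) rs := by
  induction rs with
  | nil => trivial
  | cons r rs ih => exact ⟨fun _ _ => trivial, by rw [top_sup_eq]; exact ih⟩

/-- Extension lemma for `0 → A/(I:x) → A/I → A/(I+x) → 0`. -/
theorem WR_ext {A : Type} [CommRing A] (x : A) (rs : List A) : ∀ (I : Ideal A),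
    WR (I.colon (Ideal.span {x} : Ideal A)) rs → WR (I ⊔ Ideal.span {x}) rs → WR I rs := by
  induction rs with
  | nil => intros; trivial
  | cons r rs ih =>
    intro I h1 h2
    obtain ⟨h1a, h1b⟩ := h1
    obtain ⟨h2a, h2b⟩ := h2
    refine ⟨?_, ih _ ?_ ?_⟩
    · intro f hf
      obtain ⟨g, hg, h, rfl⟩ := mem_supsp.1 (h2a f (Ideal.mem_sup_left hf))
      have h3 : r * h ∈ I.colon (Ideal.span {x} : Ideal A) := by
        rw [mem_col]
        have : x * (r * h) = r * (g + x * h) - r * g := by ring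
        rw [this]
        exact I.sub_mem hf (I.mul_mem_left _ hg)
      exact I.add_mem hg (mem_col.1 (h1a h h3))
    · convert h1b using 1
      ext f
      rw [mem_col, mem_supsp, mem_supsp]
      constructor
      · rintro ⟨g, hg, h, e⟩
        have h3 : r * h ∈ I ⊔ Ideal.span {x} := by
          rw [mem_supsp]
          exact ⟨-g, I.neg_mem hg, f, by rw [e]; ring⟩
        obtain ⟨g', hg', h', rfl⟩ := mem_supsp.1 (h2a h h3)
        refine ⟨f - r * h', ?_, h', by ring⟩
        rw [mem_col]
        have : x * (f - r * h') = g + r * g' := by rw [mul_sub, e]; ring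
        rw [this]
        exact I.add_mem hg (I.mul_mem_left _ hg')
      · rintro ⟨g, hg, h, rfl⟩
        exact ⟨x * g, mem_col.1 hg, x * h, by ring⟩
    · rw [sup_assoc, sup_comm (Ideal.span {r}), ← sup_assoc]
      exact h2b

theorem smul_top_quot {A : Type} [CommRing A] (I J : Ideal A) :
    (J • ⊤ : Submodule A (A ⧸ I)) = Submodule.map I.mkQ J := by
  have : (⊤ : Submodule A (A ⧸ I)) = Submodule.map I.mkQ ⊤ := by simp
  rw [this, ← Submodule.map_smul'']
  simp

/-- `(A/I)/r(A/I) ≃ A/(I+r)`. -/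
noncomputable def quotEquiv {A : Type} [CommRing A] (I : Ideal A) (r : A) :
    QuotSMulTop r (A ⧸ I) ≃ₗ[A] (A ⧸ (I ⊔ Ideal.span {r})) :=
  (Submodule.quotEquivOfEq _ _ (by
    rw [← Submodule.ideal_span_singleton_smul, smul_top_quot])) ≪≫ₗ
    Submodule.quotientQuotientEquivQuotientSup I (Ideal.span {r})

theorem WR.isWeaklyRegular {A : Type} [CommRing A] (rs : List A) : ∀ (I : Ideal A), WR I rs →
    RingTheory.Sequence.IsWeaklyRegular (A ⧸ I) rs := by
  induction rs with
  | nil => intro I _; exact RingTheory.Sequence.IsWeaklyRegular.nil A _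
  | cons r rs ih =>
    rintro I ⟨h1, h2⟩
    rw [RingTheory.Sequence.isWeaklyRegular_cons_iff]
    refine ⟨?_, ((quotEquiv I r).isWeaklyRegular_congr rs).2 (ih _ h2)⟩
    rw [isSMulRegular_iff_right_eq_zero_of_smul]
    intro m hm
    obtain ⟨f, rfl⟩ := Submodule.Quotient.mk_surjective _ m
    rw [← Submodule.Quotient.mk_smul, Submodule.Quotient.mk_eq_zero] at hm
    rw [Submodule.Quotient.mk_eq_zero]
    exact h1 f hm

theorem length_le_supportDim {A : Type} [CommRing A] (rs : List A) :
    ∀ (M : Type) [AddCommGroup M] [Module A M] [Module.Finite A M],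
    RingTheory.Sequence.IsRegular M rs → (rs.length : WithBot ℕ∞) ≤ Module.supportDim A M := by
  induction rs with
  | nil =>
    intro M _ _ _ h
    have : Nontrivial M := h.nontrivial
    have h1 := Module.supportDim_ne_bot_of_nontrivial A M
    obtain ⟨a, ha⟩ := WithBot.ne_bot_iff_exists.1 h1
    rw [← ha]
    simp
  | cons r rs ih =>
    intro M _ _ _ h
    rw [RingTheory.Sequence.isRegular_cons_iff] at h
    have h1 := ih _ h.2
    have h2 := Module.supportDim_quotSMulTop_succ_le_of_notMem_minimalPrimes
      (M := M) (x := r) (fun _ ↦ h.1.notMem_of_mem_minimalPrimes)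
    refine le_trans ?_ h2
    push_cast [List.length_cons]
    gcongr

variable {n : ℕ} {K : Type} [Field K]

/-- Monomial support condition. -/
def Mon (I : Ideal (MvPolynomial (Fin n) K)) : Prop :=
  ∀ f ∈ I, ∀ a ∈ f.support, monomial a (1 : K) ∈ I

theorem monomial_mem_of_le {I : Ideal (MvPolynomial (Fin n) K)} {a b : Fin n →₀ ℕ} (c : K)
    (h : monomial a (1 : K) ∈ I) (hab : a ≤ b) : monomial b c ∈ I := by
  have : monomial b c = monomial (b - a) c * monomial a (1 : K) := by
    rw [monomial_mul, tsub_add_cancel_of_le hab, mul_one]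
  rw [this]
  exact I.mul_mem_left _ h

theorem mem_of_monomials {I : Ideal (MvPolynomial (Fin n) K)} {f : MvPolynomial (Fin n) K}
    (h : ∀ a ∈ f.support, monomial a (1 : K) ∈ I) : f ∈ I := by
  rw [f.as_sum]
  exact I.sum_mem fun a ha => monomial_mem_of_le _ (h a ha) le_rfl

theorem Mon_of {I : Ideal (MvPolynomial (Fin n) K)} (h : IsMonomialIdeal I) : Mon I := by
  obtain ⟨S, rfl⟩ := h
  intro f hf a ha
  rw [mem_ideal_span_monomial_image] at hf
  obtain ⟨s, hs, hsa⟩ := hf a ha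
  exact monomial_mem_of_le _ (Ideal.subset_span ⟨s, hs, rfl⟩) hsa

theorem Mon_col {I : Ideal (MvPolynomial (Fin n) K)} (h : Mon I) (i : Fin n) (k : ℕ) :
    Mon (I.colon (Ideal.span {(X i : MvPolynomial (Fin n) K) ^ k} :
      Ideal (MvPolynomial (Fin n) K))) := by
  intro f hf a ha
  rw [mem_col] at hf ⊢
  have h2 := h _ hf (Finsupp.single i k + a) (by
    rw [X_pow_eq_monomial, mem_support_iff, coeff_monomial_mul]
    simpa using ha)
  rw [X_pow_eq_monomial, monomial_mul, mul_one]
  exact h2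

theorem sup_support {I : Ideal (MvPolynomial (Fin n) K)} (h : Mon I) {i : Fin n} {k : ℕ}
    {f : MvPolynomial (Fin n) K}
    (hf : f ∈ I ⊔ Ideal.span {(X i : MvPolynomial (Fin n) K) ^ k}) :
    ∀ a ∈ f.support, monomial a (1 : K) ∈ I ∨ k ≤ a i := by
  obtain ⟨g, hg, q, rfl⟩ := mem_supsp.1 hf
  intro a ha
  by_cases hga : a ∈ g.support
  · exact Or.inl (h g hg a hga)
  · right
    rw [mem_support_iff, coeff_add, notMem_support_iff.1 hga, zero_add, X_pow_eq_monomial,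
      coeff_monomial_mul'] at ha
    have : Finsupp.single i k ≤ a := by
      by_contra hc
      simp [hc] at ha
    simpa using this i

theorem monomial_mem_span_X_pow {i : Fin n} {k : ℕ} {a : Fin n →₀ ℕ} (h : k ≤ a i) :
    monomial a (1 : K) ∈ Ideal.span {(X i : MvPolynomial (Fin n) K) ^ k} := by
  refine monomial_mem_of_le (a := Finsupp.single i k) _ ?_ (by simpa using h)
  rw [← X_pow_eq_monomial]
  exact Ideal.mem_span_singleton_self _

theorem Mon_sup {I : Ideal (MvPolynomial (Fin n) K)} (h : Mon I) (i : Fin n) (k : ℕ) :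
    Mon (I ⊔ Ideal.span {(X i : MvPolynomial (Fin n) K) ^ k}) := by
  intro f hf a ha
  rcases sup_support h hf a ha with h1 | h1
  · exact Ideal.mem_sup_left h1
  · exact Ideal.mem_sup_right (monomial_mem_span_X_pow h1)

/-- The monomial prime generated by the variables outside `B`. -/
noncomputable def PB (K : Type) [Field K] (B : Finset (Fin n)) : Ideal (MvPolynomial (Fin n) K) :=
  Ideal.span (X '' {j | j ∉ B})

theorem X_mem_PB {B : Finset (Fin n)} {j : Fin n} (h : j ∉ B) :
    (X j : MvPolynomial (Fin n) K) ∈ PB K B := Ideal.subset_span ⟨j, h, rfl⟩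

/-- Killing the variables outside `B`. -/
noncomputable def kill (K : Type) [Field K] (B : Finset (Fin n)) :
    MvPolynomial (Fin n) K →ₐ[K] MvPolynomial {j // j ∈ B} K :=
  aeval fun j => if h : j ∈ B then X ⟨j, h⟩ else 0

theorem kill_rename (B : Finset (Fin n)) (f : MvPolynomial {j // j ∈ B} K) :
    kill K B (rename Subtype.val f) = f := by
  have : (kill K B).comp (rename Subtype.val) = AlgHom.id K _ := by
    ext j
    simp [kill]
  exact AlgHom.congr_fun this f

theorem sub_mem_PB (B : Finset (Fin n)) (f : MvPolynomial (Fin n) K) :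
    f - rename Subtype.val (kill K B f) ∈ PB K B := by
  rw [← Ideal.Quotient.eq]
  have : Ideal.Quotient.mkₐ K (PB K B) =
      (Ideal.Quotient.mkₐ K (PB K B)).comp ((rename Subtype.val).comp (kill K B)) := by
    apply MvPolynomial.algHom_ext
    intro j
    by_cases h : j ∈ B
    · simp [kill, h]
    · simpa [kill, h, Ideal.Quotient.eq_zero_iff_mem] using X_mem_PB h
  exact AlgHom.congr_fun this f

theorem PB_eq_ker (B : Finset (Fin n)) : PB K B = RingHom.ker (kill K B) := by
  apply le_antisymm
  · rw [PB, Ideal.span_le]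
    rintro _ ⟨j, hj, rfl⟩
    have hj' : j ∉ B := hj
    simp [kill, hj']
  · intro f hf
    have := sub_mem_PB B f
    rw [RingHom.mem_ker] at hf
    rwa [hf, map_zero, sub_zero] at this

instance PB_prime (B : Finset (Fin n)) : (PB K B).IsPrime := by
  rw [PB_eq_ker]
  exact RingHom.ker_isPrime _

theorem X_notMem_PB {B : Finset (Fin n)} {j : Fin n} (h : j ∈ B) :
    (X j : MvPolynomial (Fin n) K) ∉ PB K B := by
  rw [PB_eq_ker, RingHom.mem_ker]
  simp [kill, h]

theorem dim_PB (B : Finset (Fin n)) :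
    ringKrullDim (MvPolynomial (Fin n) K ⧸ PB K B) = B.card := by
  have hs : Function.Surjective (kill K B) := fun f => ⟨_, kill_rename B f⟩
  have e : (MvPolynomial (Fin n) K ⧸ PB K B) ≃+* MvPolynomial {j // j ∈ B} K :=
    (Ideal.quotEquivOfEq (PB_eq_ker B)).trans
      (Ideal.quotientKerAlgEquivOfSurjective hs).toRingEquiv
  have h1 := ringKrullDim_eq_of_ringEquiv e
  rw [MvPolynomial.ringKrullDim_of_isNoetherianRing] at h1
  rw [h1]
  simp

/-- The universal parameter sequence `e_d, e_{d-1}, …, e_1`. -/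
noncomputable def L (n : ℕ) (K : Type) [Field K] : ℕ → List (MvPolynomial (Fin n) K)
  | 0 => []
  | d + 1 => esymm (Fin n) K (d + 1) :: L n K d

theorem L_length (d : ℕ) : (L n K d).length = d := by
  induction d with
  | zero => rfl
  | succ d ih => simp [L, ih]

theorem L_mem (d : ℕ) : ∀ r ∈ L n K d, r ∈ mIdeal n K := by
  induction d with
  | zero => simp [L]
  | succ d ih =>
    intro r hr
    simp only [L, List.mem_cons] at hr
    rcases hr with rfl | hr
    · rw [esymm]
      refine Ideal.sum_mem _ fun t ht => ?_
      have hc := (Finset.mem_powersetCard.1 ht).2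
      obtain ⟨j, hj⟩ : t.Nonempty := by
        rw [← Finset.card_pos]; omega
      exact Ideal.mem_of_dvd _ (Finset.dvd_prod_of_mem _ hj) (Ideal.subset_span ⟨j, rfl⟩)
    · exact ih r hr

theorem esymm_sub_mem (B : Finset (Fin n)) :
    esymm (Fin n) K B.card - ∏ j ∈ B, X j ∈ PB K B := by
  classical
  rw [esymm, ← Finset.add_sum_erase _ _
    (Finset.mem_powersetCard.2 ⟨Finset.subset_univ B, rfl⟩), add_sub_cancel_left]
  refine Ideal.sum_mem _ fun t ht => ?_
  rw [Finset.mem_erase, Finset.mem_powersetCard] at ht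
  obtain ⟨j, hj, hjB⟩ : ∃ j ∈ t, j ∉ B := by
    by_contra! hc
    exact ht.1 (Finset.eq_of_subset_of_card_le hc ht.2.2.ge)
  exact Ideal.mem_of_dvd _ (Finset.dvd_prod_of_mem _ hj) (X_mem_PB hjB)

theorem PB_sup (B : Finset (Fin n)) (b : Fin n) :
    PB K B ⊔ Ideal.span {X b} = PB K (B.erase b) := by
  rw [PB, PB, ← Ideal.span_union]
  congr 1
  ext f
  simp only [Set.mem_union, Set.mem_image, Set.mem_singleton_iff, Set.mem_ofPred_eq,
    Finset.mem_erase, not_and_or, not_not]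
  constructor
  · rintro (⟨j, hj, rfl⟩ | rfl)
    · exact ⟨j, Or.inr hj, rfl⟩
    · exact ⟨b, Or.inl rfl, rfl⟩
  · rintro ⟨j, (rfl | hj), rfl⟩
    · exact Or.inr rfl
    · exact Or.inl ⟨j, hj, rfl⟩

theorem WR_PB (d : ℕ) : ∀ B : Finset (Fin n), B.card = d → WR (PB K B) (L n K d) := by
  classical
  induction d with
  | zero => intros; trivial
  | succ d ih =>
    intro B hB
    have he := esymm_sub_mem (K := K) B
    rw [hB] at he
    refine ⟨?_, ?_⟩
    · intro f hf
      refine ((PB_prime B).mem_or_mem hf).resolve_left fun h => ?_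
      have h1 : ∏ j ∈ B, X j ∈ PB K B := by
        have := (PB K B).sub_mem h he
        rwa [sub_sub_cancel] at this
      obtain ⟨j, hj, hjm⟩ := ((PB_prime B).prod_mem_iff).1 h1
      exact X_notMem_PB hj hjm
    · have e1 : PB K B ⊔ Ideal.span {esymm (Fin n) K (d + 1)} =
          PB K B ⊔ Ideal.span {∏ j ∈ B, X j} := by
        ext f
        rw [mem_supsp, mem_supsp]
        constructor
        · rintro ⟨g, hg, h, rfl⟩
          exact ⟨g + (esymm (Fin n) K (d + 1) - ∏ j ∈ B, X j) * h,
            Ideal.add_mem _ hg (Ideal.mul_mem_right _ _ he), h, by ring⟩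
        · rintro ⟨g, hg, h, rfl⟩
          exact ⟨g - (esymm (Fin n) K (d + 1) - ∏ j ∈ B, X j) * h,
            Ideal.sub_mem _ hg (Ideal.mul_mem_right _ _ he), h, by ring⟩
      rw [e1]
      suffices H : ∀ C : Finset (Fin n), C ⊆ B →
          WR (PB K B ⊔ Ideal.span {∏ j ∈ C, X j}) (L n K d) from H B subset_rfl
      intro C
      induction C using Finset.induction_on with
      | empty =>
        intro _
        simp only [Finset.prod_empty, Ideal.span_singleton_one, sup_top_eq]
        exact WR_top _
      | insert b C hb ihC =>
        intro hC
        have hbB : b ∈ B := hC (Finset.mem_insert_self _ _)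
        rw [Finset.prod_insert hb]
        apply WR_ext (X b)
        · convert ihC ((Finset.subset_insert _ _).trans hC) using 1
          ext f
          rw [mem_col, mem_supsp, mem_supsp]
          constructor
          · rintro ⟨g, hg, h, e⟩
            refine ⟨f - (∏ j ∈ C, X j) * h, ?_, h, by ring⟩
            have : X b * (f - (∏ j ∈ C, X j) * h) ∈ PB K B := by
              rw [mul_sub, e]
              convert hg using 1
              ring
            exact ((PB_prime B).mem_or_mem this).resolve_left (X_notMem_PB hbB)
          · rintro ⟨g, hg, h, rfl⟩
            exact ⟨X b * g, Ideal.mul_mem_left _ _ hg, h, by ring⟩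
        · have : PB K B ⊔ Ideal.span {X b * ∏ j ∈ C, X j} ⊔ Ideal.span {X b} =
              PB K (B.erase b) := by
            have hle : Ideal.span {X b * ∏ j ∈ C, (X j : MvPolynomial (Fin n) K)} ≤
                Ideal.span {X b} := by
              rw [Ideal.span_singleton_le_span_singleton]
              exact dvd_mul_right _ _
            rw [← PB_sup, sup_assoc, sup_eq_right.2 hle]
          rw [this]
          exact ih _ (by rw [Finset.card_erase_of_mem hbB, hB]; rfl)

theorem Mon_cancel {Q : Ideal (MvPolynomial (Fin n) K)} {B : Finset (Fin n)}
    (h3 : ∀ j ∈ B, ∀ f, X j * f ∈ Q → f ∈ Q) (a : Fin n →₀ ℕ) (ha : ∀ j ∉ B, a j = 0)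
    (hm : monomial a (1 : K) ∈ Q) : (1 : MvPolynomial (Fin n) K) ∈ Q := by
  have key : ∀ j ∈ B, ∀ (m : ℕ) f, X j ^ m * f ∈ Q → f ∈ Q := by
    intro j hj m
    induction m with
    | zero => intro f hf; simpa using hf
    | succ m ih =>
      intro f hf
      rw [pow_succ', mul_assoc] at hf
      exact ih f (h3 j hj _ hf)
  have key2 : ∀ C : Finset (Fin n), C ⊆ B → ∏ j ∈ C, (X j : MvPolynomial (Fin n) K) ^ a j ∈ Q →
      (1 : MvPolynomial (Fin n) K) ∈ Q := by
    classical
    intro C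
    induction C using Finset.induction_on with
    | empty => intro _ h; simpa using h
    | insert b C hb ih =>
      intro hC h
      rw [Finset.prod_insert hb] at h
      exact ih ((Finset.subset_insert _ _).trans hC)
        (key b (hC (Finset.mem_insert_self _ _)) _ _ h)
  refine key2 B subset_rfl ?_
  rw [monomial_eq, C_1, one_mul, Finsupp.prod_fintype _ _ (by simp)] at hm
  rwa [Finset.prod_subset (Finset.subset_univ B)]
  intro j _ hj
  rw [ha j hj, pow_zero]

theorem WR_good (B : Finset (Fin n)) (Q : Ideal (MvPolynomial (Fin n) K)) :
    Mon Q → (∀ j ∉ B, ∃ m, X j ^ m ∈ Q) → (∀ j ∈ B, ∀ f, X j * f ∈ Q → f ∈ Q) →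
    WR Q (L n K B.card) := by
  induction Q using WellFoundedGT.induction with
  | ind Q ih =>
  intro h1 h2 h3
  by_cases hall : ∀ j ∉ B, X j ∈ Q
  · have hle : PB K B ≤ Q := by
      rw [PB, Ideal.span_le]
      rintro _ ⟨j, hj, rfl⟩
      exact hall j hj
    by_cases hge : Q ≤ PB K B
    · rw [le_antisymm hge hle]
      exact WR_PB _ B rfl
    · obtain ⟨f, hf, hfP⟩ := SetLike.not_le_iff_exists.1 hge
      rw [PB, mem_ideal_span_X_image] at hfP
      push Not at hfP
      obtain ⟨a, ha, hab⟩ := hfP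
      have := Mon_cancel h3 a (fun j hj => hab j hj) (h1 f hf a ha)
      rw [(Ideal.eq_top_iff_one Q).2 this]
      exact WR_top _
  · push Not at hall
    obtain ⟨j, hj, hjQ⟩ := hall
    apply WR_ext (X j)
    · apply ih
      · refine lt_of_le_of_ne Ideal.le_colon fun e => ?_
        classical
        have hex := h2 j hj
        have hspec := Nat.find_spec hex
        have hmin := Nat.find_min hex (m := Nat.find hex - 1)
        have h0 : Nat.find hex ≠ 0 := by
          intro h0
          rw [h0, pow_zero] at hspec
          exact hjQ ((Ideal.eq_top_iff_one Q).2 hspec ▸ trivial)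
        refine hmin (by omega) ?_
        refine e.ge (mem_col.2 ?_)
        rw [← pow_succ', Nat.sub_add_cancel (by omega)]
        exact hspec
      · have := Mon_col h1 j 1
        rwa [pow_one] at this
      · intro l hl
        obtain ⟨m, hm⟩ := h2 l hl
        exact ⟨m, Ideal.le_colon hm⟩
      · intro l hl f hf
        rw [mem_col] at hf ⊢
        refine h3 l hl _ ?_
        rwa [mul_left_comm]
    · apply ih
      · refine lt_of_le_of_ne le_sup_left fun e => hjQ ?_
        rw [e]
        exact Ideal.mem_sup_right (Ideal.mem_span_singleton_self _)
      · have := Mon_sup h1 j 1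
        rwa [pow_one] at this
      · intro l hl
        obtain ⟨m, hm⟩ := h2 l hl
        exact ⟨m, Ideal.mem_sup_left hm⟩
      · intro l hl f hf
        refine mem_of_monomials fun a ha => ?_
        have hs := sup_support (k := 1) h1 (by rwa [pow_one]) (Finsupp.single l 1 + a) (by
          rw [X, mem_support_iff, coeff_monomial_mul]
          simpa using ha)
        rcases hs with hs | hs
        · refine Ideal.mem_sup_left (h3 l hl _ ?_)
          rw [X, monomial_mul, mul_one]
          exact hs
        · have hlj : l ≠ j := fun e => hj (e ▸ hl)
          refine Ideal.mem_sup_right ?_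
          have := monomial_mem_span_X_pow (K := K) (i := j) (k := 1) (a := a) (by
            simpa [hlj] using hs)
          rwa [pow_one] at this

theorem WR_main (d : ℕ) (I : Ideal (MvPolynomial (Fin n) K)) (hdec : IsAssDecomposable I) :
    Mon I → (∀ 𝔭 ∈ associatedPrimes (MvPolynomial (Fin n) K) (MvPolynomial (Fin n) K ⧸ I),
      ringKrullDim (MvPolynomial (Fin n) K ⧸ 𝔭) = d) → WR I (L n K d) := by
  induction hdec with
  | @primary Q h =>
    intro hm hd
    classical
    have hP : Q.radical.IsPrime := Ideal.isPrime_radical h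
    let B : Finset (Fin n) := Finset.univ.filter fun j => (X j : MvPolynomial (Fin n) K) ∉ Q.radical
    have hB : ∀ j, j ∈ B ↔ (X j : MvPolynomial (Fin n) K) ∉ Q.radical := by simp [B]
    have hrad : Q.radical = PB K B := by
      apply le_antisymm
      · rw [(PB_prime B).radical_le_iff]
        intro f hf
        refine mem_of_monomials fun a ha => ?_
        have hma := Ideal.le_radical (hm f hf a ha)
        rw [monomial_eq, C_1, one_mul, Finsupp.prod, hP.prod_mem_iff] at hma
        obtain ⟨j, hj, hja⟩ := hma
        have hjB : j ∉ B := by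
          rw [hB, not_not]
          exact hP.mem_of_pow_mem _ hja
        rw [monomial_eq, C_1, one_mul]
        refine Ideal.mem_of_dvd _ ((dvd_pow_self _ (Finsupp.mem_support_iff.1 hj)).trans
          (Finset.dvd_prod_of_mem (fun j => (X j : MvPolynomial (Fin n) K) ^ a j) hj))
          (X_mem_PB hjB)
      · rw [PB, Ideal.span_le]
        rintro _ ⟨j, hj, rfl⟩
        have hj' : j ∉ B := hj
        rwa [hB, not_not] at hj'
    have hcard : B.card = d := by
      have := hd Q.radical (by rw [associatedPrimes.eq_singleton_of_isPrimary h]; rfl)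
      rw [hrad, dim_PB] at this
      exact_mod_cast this
    rw [← hcard]
    refine WR_good B Q hm ?_ ?_
    · intro j hj
      rw [hB, not_not] at hj
      exact hj
    · intro j hj f hf
      rw [hB] at hj
      rw [mul_comm] at hf
      exact ((Ideal.isPrimary_iff.1 h).2 hf).resolve_right hj
  | @step I i k hk hx hass _ _ ih1 ih2 =>
    intro hm hd
    apply WR_ext (X i ^ k)
    · refine ih2 (Mon_col hm i k) fun 𝔭 h𝔭 => hd 𝔭 ?_
      let φ : (MvPolynomial (Fin n) K ⧸ I.colon (Ideal.span {(X i : MvPolynomial (Fin n) K) ^ k} :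
          Ideal (MvPolynomial (Fin n) K))) →ₗ[MvPolynomial (Fin n) K] (MvPolynomial (Fin n) K ⧸ I) :=
        Submodule.mapQ _ _ (LinearMap.mulLeft (MvPolynomial (Fin n) K) (X i ^ k))
          (fun f hf => mem_col.1 hf)
      refine associatedPrimes.subset_of_injective (f := φ) ?_ h𝔭
      rw [← LinearMap.ker_eq_bot, LinearMap.ker_eq_bot']
      intro m hmz
      obtain ⟨f, rfl⟩ := Submodule.Quotient.mk_surjective _ m
      have hmz' : (Submodule.Quotient.mk (X i ^ k * f) : MvPolynomial (Fin n) K ⧸ I) = 0 := hmz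
      rw [Submodule.Quotient.mk_eq_zero] at hmz'
      rw [Submodule.Quotient.mk_eq_zero]
      exact mem_col.2 hmz'
    · refine ih1 (Mon_sup hm i k) fun 𝔭 h𝔭 => hd 𝔭 ?_
      rw [hass] at h𝔭
      exact h𝔭.1

theorem ne_top_of_dec {I : Ideal (MvPolynomial (Fin n) K)} (h : IsAssDecomposable I) : I ≠ ⊤ := by
  cases h with
  | primary h => exact (Ideal.isPrimary_iff.1 h).1
  | step i k hk hx => 
    rintro rfl
    exact hx (Ideal.le_radical trivial)

theorem Mon_le {I : Ideal (MvPolynomial (Fin n) K)} (hm : Mon I) (h : I ≠ ⊤) :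
    I ≤ mIdeal n K := by
  intro f hf
  refine mem_of_monomials fun a ha => ?_
  have h1 := hm f hf a ha
  have ha0 : a ≠ 0 := by
    rintro rfl
    exact h ((Ideal.eq_top_iff_one I).2 h1)
  obtain ⟨j, hj⟩ := Finsupp.ne_iff.1 ha0
  have h2 := monomial_mem_span_X_pow (K := K) (i := j) (k := 1) (a := a)
    (Nat.one_le_iff_ne_zero.2 hj)
  rw [pow_one] at h2
  exact Ideal.span_mono (Set.singleton_subset_iff.2 (Set.mem_range_self j)) h2

theorem mIdeal_ne_top : mIdeal n K ≠ ⊤ := by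
  have : mIdeal n K ≤ PB K ∅ := by
    rw [mIdeal, Ideal.span_le]
    rintro _ ⟨j, rfl⟩
    exact X_mem_PB (by simp)
  exact ne_top_of_le_ne_top (PB_prime ∅).ne_top this

end Helpers

/-- An unmixed ass-decomposable monomial ideal is Cohen-Macaulay. -/
theorem statement_12 (n : ℕ) (K : Type) [Field K] (I : Ideal (MvPolynomial (Fin n) K))
    (hmon : IsMonomialIdeal I) (hunm : IsUnmixed I) (hdec : IsAssDecomposable I) :
    IsCMMod n K (MvPolynomial (Fin n) K ⧸ I) := by
  have hm := Mon_of hmon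
  have hI := ne_top_of_dec hdec
  have hnt : Nontrivial (MvPolynomial (Fin n) K ⧸ I) := Ideal.Quotient.nontrivial_iff.2 hI
  obtain ⟨d, hd⟩ : ∃ d : ℕ, ringKrullDim (MvPolynomial (Fin n) K ⧸ I) = d := by
    have h1 : ringKrullDim (MvPolynomial (Fin n) K ⧸ I) ≤ n := by
      refine (ringKrullDim_quotient_le I).trans ?_
      rw [MvPolynomial.ringKrullDim_of_isNoetherianRing]
      simp
    have h0 : ringKrullDim (MvPolynomial (Fin n) K ⧸ I) ≠ ⊥ := by
      intro hb
      have h0 := ringKrullDim_nonneg_of_nontrivial (R := MvPolynomial (Fin n) K ⧸ I)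
      rw [hb] at h0
      simp at h0
    obtain ⟨a, ha⟩ := WithBot.ne_bot_iff_exists.1 h0
    rw [← ha] at h1 ⊢
    have h2 : a ≤ (n : ℕ∞) := by exact_mod_cast h1
    obtain ⟨m, hm⟩ := ENat.ne_top_iff_exists.1 (ne_top_of_le_ne_top (ENat.natCast_ne_top n) h2)
    exact ⟨m, by rw [← hm]; rfl⟩
  have hWR := WR_main d I hdec hm fun 𝔭 h𝔭 => (hunm 𝔭 h𝔭).symm.trans hd
  have hreg : RingTheory.Sequence.IsRegular (MvPolynomial (Fin n) K ⧸ I) (L n K d) := by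
    refine ⟨WR.isWeaklyRegular _ _ hWR, fun htop => ?_⟩
    rw [smul_top_quot] at htop
    have h1 : (Submodule.Quotient.mk 1 : MvPolynomial (Fin n) K ⧸ I) ∈
        Submodule.map I.mkQ (Ideal.ofList (L n K d)) := by
      rw [← htop]; trivial
    obtain ⟨g, hg, hg1⟩ := h1
    rw [Submodule.mkQ_apply, Submodule.Quotient.eq] at hg1
    have hg2 : g ∈ mIdeal n K := (Ideal.span_le.2 (fun r hr => L_mem d r hr)) hg
    apply mIdeal_ne_top (n := n) (K := K)
    rw [Ideal.eq_top_iff_one]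
    have := (mIdeal n K).sub_mem hg2 (Mon_le hm hI hg1)
    rwa [sub_sub_cancel] at this
  have hdepth : depth (mIdeal n K) (MvPolynomial (Fin n) K ⧸ I) = d := by
    apply le_antisymm
    · apply sSup_le
      rintro _ ⟨rs, rfl, _, hrs⟩
      have := length_le_supportDim rs _ hrs
      rw [Module.supportDim_quotient_eq_ringKrullDim, hd] at this
      exact_mod_cast this
    · exact le_sSup ⟨L n K d, by rw [L_length], L_mem d, hreg⟩
  rw [IsCMMod, hdepth, mdim, Ideal.annihilator_quotient, hd]
  rfl

end Paper
end

section
/- Let G be a chordal graph on vertex set [n] with edge ideal I = I(G) ⊆ R = K[x_1,…,x_n]. Then depth(R/I) = min{ dim R/𝔭 : 𝔭 ∈ ass(I) } = n − bigh(I), where bigh(I) is the maximum height of an associated prime of I. -/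
open MvPolynomial

namespace Paper

/-- A chord of a cycle: an edge of `G` joining two vertices of the cycle that are not
adjacent in the cycle. `G` is chordal if every cycle of length at least four has a
chord. -/
def IsChordalG {n : ℕ} (G : SimpleGraph (Fin n)) : Prop :=
  ∀ (v : Fin n) (w : G.Walk v v), w.IsCycle → 4 ≤ w.length →
    ∃ a b : Fin n, a ∈ w.support ∧ b ∈ w.support ∧ G.Adj a b ∧ s(a, b) ∉ w.edges

/-- The edge ideal `I(G) = (x_u x_v : {u,v} ∈ E(G))`. -/
noncomputable def edgeIdeal (n : ℕ) (K : Type) [Field K] (G : SimpleGraph (Fin n)) :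
    Ideal (MvPolynomial (Fin n) K) :=
  Ideal.span {m | ∃ u v : Fin n, G.Adj u v ∧ m = X u * X v}

section Alg
open RingTheory.Sequence CategoryTheory Abelian Limits Pointwise

def HasDepthGE {A : Type} [CommRing A] (J : Ideal A) (t : ℕ)
    (M : Type) [AddCommGroup M] [Module A M] : Prop :=
  ∃ rs : List A, rs.length = t ∧ (∀ r ∈ rs, r ∈ J) ∧ IsRegular M rs

lemma hasDepthGE_iff_ext {A : Type} [CommRing A] [IsNoetherianRing A] (J : Ideal A) (t : ℕ)
    (M : Type) [AddCommGroup M] [Module A M] [Module.Finite A M]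
    (hM : J • (⊤ : Submodule A M) < ⊤) :
    HasDepthGE J t M ↔
      ∀ i < t, Subsingleton (Ext (ModuleCat.of A (Shrink.{0} (A ⧸ J))) (ModuleCat.of A M) i) := by
  exact ((ModuleCat.exists_isRegular_tfae J t (ModuleCat.of A M) hM).out 1 3).symm

lemma hasDepthGE_of_ses {A : Type} [CommRing A] [IsNoetherianRing A] (J : Ideal A) (t : ℕ)
    {M₁ M₂ M₃ : Type} [AddCommGroup M₁] [Module A M₁] [Module.Finite A M₁]
    [AddCommGroup M₂] [Module A M₂] [Module.Finite A M₂]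
    [AddCommGroup M₃] [Module A M₃] [Module.Finite A M₃]
    (h1 : J • (⊤ : Submodule A M₁) < ⊤) (h2 : J • (⊤ : Submodule A M₂) < ⊤)
    (h3 : J • (⊤ : Submodule A M₃) < ⊤)
    (f : M₁ →ₗ[A] M₂) (g : M₂ →ₗ[A] M₃) (hf : Function.Injective f)
    (hg : Function.Surjective g) (hfg : Function.Exact f g)
    (d1 : HasDepthGE J t M₁) (d3 : HasDepthGE J t M₃) : HasDepthGE J t M₂ := by
  rw [hasDepthGE_iff_ext J t _ h1] at d1
  rw [hasDepthGE_iff_ext J t _ h3] at d3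
  rw [hasDepthGE_iff_ext J t _ h2]
  intro i hi
  let S : ShortComplex (ModuleCat.{0} A) := ShortComplex.mk (ModuleCat.ofHom f) (ModuleCat.ofHom g)
    (by ext x; exact hfg.apply_apply_eq_zero x)
  have hS : S.ShortExact := ModuleCat.shortComplex_shortExact S hfg hf hg
  refine subsingleton_of_forall_eq 0 fun x => ?_
  have := d1 i hi
  have := d3 i hi
  obtain ⟨y, hy⟩ := Ext.covariant_sequence_exact₂ _ hS x (@Subsingleton.elim _ (d3 i hi) _ _)
  have h0 : y = 0 := @Subsingleton.elim _ (d1 i hi) _ _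
  rw [← hy, h0, Ext.zero_comp]

lemma hasDepthGE_cons {A : Type} [CommRing A] (J : Ideal A) (t : ℕ)
    {M M' : Type} [AddCommGroup M] [Module A M] [AddCommGroup M'] [Module A M']
    (r : A) (hr : r ∈ J) (hreg : IsSMulRegular M r) (e : QuotSMulTop r M ≃ₗ[A] M')
    (h : HasDepthGE J t M') : HasDepthGE J (t+1) M := by
  obtain ⟨rs, hl, hm, hreg'⟩ := h
  refine ⟨r :: rs, by simp [hl], by simpa using ⟨hr, hm⟩, ?_⟩
  exact (isRegular_cons_iff _ _ _).2 ⟨hreg, (e.isRegular_congr rs).2 hreg'⟩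

lemma exists_next {A : Type} [CommRing A] [IsNoetherianRing A] (J : Ideal A) [hJ : J.IsPrime]
    (M : Type) [AddCommGroup M] [Module A M] [Module.Finite A M] (p : Ideal A)
    (hp : p ∈ associatedPrimes A M) (hpJ : p ≤ J) (r : A) (hr : r ∈ J) (hreg : IsSMulRegular M r) :
    ∃ q ∈ associatedPrimes A (QuotSMulTop r M), q ≤ J ∧ p < q := by
  obtain ⟨hpp, z, hz⟩ := isAssociatedPrime_iff.1 hp
  have hz' : ∀ a, a ∈ p ↔ a • z = 0 := fun a => by
    rw [hz, Submodule.mem_colon_singleton, Submodule.mem_bot]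
  have hrp : r ∉ p := fun h => by
    have : z = 0 := hreg.right_eq_zero_of_smul ((hz' r).1 h)
    exact hpp.ne_top ((Ideal.eq_top_iff_one _).2 ((hz' 1).2 (by simp [this])))
  let N : Submodule A M := ⨅ a : p, LinearMap.ker (LinearMap.lsmul A M a)
  have hN : ∀ x, x ∈ N ↔ ∀ a ∈ p, a • x = 0 := fun x => by simp [N]
  have hzN : z ∈ N := (hN z).2 fun a ha => (hz' a).1 ha
  have key : ∃ x ∈ N, ∀ s ∉ J, s • x ∉ (r • (⊤ : Submodule A M)) := by
    by_contra! hcon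
    choose! s hs hs' using hcon
    obtain ⟨S, hS⟩ := (IsNoetherian.noetherian N : N.FG)
    classical
    let σ := ∏ x ∈ S, s x
    have hSN : ∀ x ∈ S, x ∈ N := fun x hx => hS ▸ Submodule.subset_span hx
    have hσ : σ ∉ J := fun h => by
      obtain ⟨x, hx, hx'⟩ := (Ideal.IsPrime.prod_mem_iff).1 h
      exact hs x (hSN x hx) hx'
    have h1 : N ≤ Submodule.comap (LinearMap.lsmul A M σ) (r • (⊤ : Submodule A M)) := by
      rw [← hS, Submodule.span_le]
      intro x hx
      have : σ = (∏ y ∈ S.erase x, s y) * s x := (Finset.prod_erase_mul S s hx).symm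
      simp only [Submodule.comap_coe, Set.mem_preimage, LinearMap.lsmul_apply, SetLike.mem_coe]
      rw [this, mul_smul]
      exact Submodule.smul_mem _ _ (hs' x (hSN x hx))
    have h2 : LinearMap.range (algebraMap A (Module.End A N) σ) ≤ Ideal.span {r} • ⊤ := by
      rintro _ ⟨⟨x, hx⟩, rfl⟩
      have := h1 hx
      simp only [Submodule.mem_comap, LinearMap.lsmul_apply] at this
      obtain ⟨y, -, hy⟩ := this
      have hyN : y ∈ N := (hN y).2 fun a ha => by
        apply hreg.right_eq_zero_of_smul
        rw [smul_comm]
        have : r • y = σ • x := hy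
        rw [this, smul_comm, (hN x).1 hx a ha, smul_zero]
      have : algebraMap A (Module.End A N) σ ⟨x, hx⟩ = r • ⟨y, hyN⟩ := by
        ext
        simpa using! hy.symm
      rw [this]
      exact Submodule.smul_mem_smul (Ideal.mem_span_singleton_self r) trivial
    obtain ⟨P, hmon, -, hcoeff, hP⟩ :=
      LinearMap.exists_monic_and_natDegree_eq_and_coeff_mem_pow_and_aeval_eq_zero _ _ _ h2
    rw [Polynomial.aeval_algebraMap_apply] at hP
    have h3 : Polynomial.aeval σ P ∈ p := by
      rw [hz']
      have := congrArg (fun φ => (φ ⟨z, hzN⟩ : N)) hP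
      simpa using congrArg Subtype.val this
    have h4 := hpJ h3
    rw [Polynomial.aeval_eq_sum_range, Finset.sum_range_succ] at h4
    have h5 : ∑ i ∈ Finset.range P.natDegree, P.coeff i • σ ^ i ∈ J := by
      refine sum_mem fun i hi => ?_
      rw [smul_eq_mul]
      refine J.mul_mem_right _ ?_
      have h6 := hcoeff i
      have : P.natDegree - i ≠ 0 := by simp at hi; omega
      exact (Ideal.span_singleton_le_iff_mem J).2 hr (Ideal.pow_le_self this h6)
    have h7 := (J.add_mem_iff_right h5).1 h4
    rw [hmon.coeff_natDegree, one_smul] at h7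
    exact hσ (hJ.mem_of_pow_mem _ h7)
  obtain ⟨x, hxN, hx⟩ := key
  let x' : QuotSMulTop r M := Submodule.Quotient.mk x
  have hx' : ∀ a, a ∈ (⊥ : Submodule A (QuotSMulTop r M)).colon {x'} ↔
      a • x ∈ (r • (⊤ : Submodule A M)) := fun a => by
    rw [Submodule.mem_colon_singleton, Submodule.mem_bot]
    rw [← Submodule.Quotient.mk_smul, Submodule.Quotient.mk_eq_zero]
  have hle : (⊥ : Submodule A (QuotSMulTop r M)).colon {x'} ≤ J := fun a ha => by
    by_contra h
    exact hx a h ((hx' a).1 ha)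
  obtain ⟨q, hq, hqJ⟩ := Ideal.exists_minimalPrimes_le hle
  refine ⟨q, isAssociatedPrime_iff.2 ⟨hq.1.1, Submodule.exists_eq_colon_of_mem_minimalPrimes hq⟩, hqJ, ?_⟩
  refine SetLike.lt_iff_le_and_exists.2 ⟨fun a ha => hq.1.2 ((hx' a).2 ?_), r, hq.1.2 ((hx' r).2 ?_), hrp⟩
  · rw [(hN x).1 hxN a ha]; exact zero_mem _
  · exact Submodule.smul_mem_pointwise_smul _ _ _ trivial

lemma length_le_coheight {A : Type} [CommRing A] [IsNoetherianRing A] (J : Ideal A) [hJ : J.IsPrime]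
    (rs : List A) (hrs : ∀ r ∈ rs, r ∈ J) :
    ∀ (M : Type) [AddCommGroup M] [Module A M] [Module.Finite A M] (p : PrimeSpectrum A)
    (_ : p.asIdeal ∈ associatedPrimes A M) (_ : p.asIdeal ≤ J) (_ : IsWeaklyRegular M rs),
    (rs.length : ℕ∞) ≤ Order.coheight p := by
  induction rs with
  | nil => intros; simp
  | cons r rs ih =>
    intro M _ _ _ p hp hpJ hreg
    rw [isWeaklyRegular_cons_iff] at hreg
    obtain ⟨q, hq, hqJ, hlt⟩ := exists_next J M p.asIdeal hp hpJ r (hrs r (by simp)) hreg.1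
    have := ih (fun r hr => hrs r (by simp [hr])) (QuotSMulTop r M) ⟨q, hq.1⟩ hq hqJ hreg.2
    have h2 : p < ⟨q, hq.1⟩ := hlt
    have h3 := Order.coheight_add_one_le h2
    rw [List.length_cons]
    push_cast
    exact (add_le_add_left this 1).trans h3

end Alg

/-- restriction of a graph to a vertex set, keeping the ambient vertex type -/
def restr {V : Type} (G : SimpleGraph V) (U : Set V) : SimpleGraph V where
  Adj x y := G.Adj x y ∧ x ∈ U ∧ y ∈ U
  symm := ⟨fun _ _ h => ⟨h.1.symm, h.2.2, h.2.1⟩⟩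
  loopless := ⟨fun x h => G.loopless.irrefl x h.1⟩

lemma restr_le {V : Type} (G : SimpleGraph V) (U : Set V) : restr G U ≤ G := fun _ _ h => h.1

lemma restr_mono {V : Type} (G : SimpleGraph V) {U U' : Set V} (h : U ⊆ U') :
    restr G U ≤ restr G U' := fun _ _ h' => ⟨h'.1, h h'.2.1, h h'.2.2⟩

lemma restr_support {V : Type} (G : SimpleGraph V) (U : Set V) {u v : V} (p : (restr G U).Walk u v)
    (hu : u ∈ U) : ∀ x ∈ p.support, x ∈ U := by
  induction p with
  | nil => simpa using hu
  | cons h p ih =>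
    intro x hx
    rw [SimpleGraph.Walk.support_cons, List.mem_cons] at hx
    rcases hx with rfl | hx
    · exact hu
    · exact ih h.2.2 x hx

lemma edge_of_shortest {V : Type} (G : SimpleGraph V) {u v : V} (p : G.Walk u v)
    (hp : p.length = G.dist u v) {x y : V} (hx : x ∈ p.support) (hy : y ∈ p.support)
    (hxy : G.Adj x y) : s(x, y) ∈ p.edges := by
  rw [SimpleGraph.Walk.mem_support_iff_exists_getVert] at hx hy
  obtain ⟨i, rfl, hi⟩ := hx
  obtain ⟨j, rfl, hj⟩ := hy
  have main : ∀ i j, i ≤ p.length → j ≤ p.length → i < j → G.Adj (p.getVert i) (p.getVert j) →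
      s(p.getVert i, p.getVert j) ∈ p.edges := by
    intro i j hi hj hij hadj
    have h1 : ((p.take i).append (SimpleGraph.Walk.cons hadj (p.drop j))).length ≥ G.dist u v :=
      SimpleGraph.dist_le _
    have h2 : j = i + 1 := by
      simp at h1
      omega
    subst h2
    exact (SimpleGraph.Walk.mk_mem_edges_iff_exists p).2 ⟨i, by omega, rfl⟩
  rcases lt_trichotomy i j with h | h | h
  · exact main i j hi hj h hxy
  · subst h; exact absurd hxy (G.loopless.irrefl _)
  · rw [Sym2.eq_swap]; exact main j i hj hi h hxy.symm

lemma sep_clique {n : ℕ} (G : SimpleGraph (Fin n)) (hG : IsChordalG G) (a : Fin n)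
    (T : Set (Fin n)) (haT : a ∉ T) (hT : ∀ x ∈ T, ¬ G.Adj a x) (s s' : Fin n) (hne : s ≠ s')
    (hs : G.Adj a s) (hs' : G.Adj a s') (hr : (restr G (T ∪ {s, s'})).Reachable s s') :
    G.Adj s s' := by
  by_contra hnadj
  set U := T ∪ {s, s'} with hU
  obtain ⟨p, hpath, hlen⟩ := hr.exists_path_of_dist
  have hsup := restr_support G U p (by simp [hU])
  have haU : a ∉ U := by
    simp [hU, haT, hs.ne, hs'.ne]
  let q := p.mapLe (restr_le G U)
  have hq2 : 2 ≤ p.length := by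
    rcases hpl : p.length with _ | _ | k
    · exact absurd (SimpleGraph.Walk.eq_of_length_eq_zero hpl) hne
    · exact absurd (SimpleGraph.Walk.adj_of_length_eq_one hpl).1 hnadj
    · omega
  have hqs : q.support = p.support := by simp [q]
  have hqe : q.edges = p.edges := by simp [q]
  have haq : a ∉ q.support := fun h => haU (hsup a (hqs ▸ h))
  let c : G.Walk a a := SimpleGraph.Walk.cons hs (q.concat hs'.symm)
  have hqpath : q.IsPath := hpath.mapLe _
  have hpath2 : (q.concat hs'.symm).IsPath := hqpath.concat haq _
  have hc : c.IsCycle := by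
    rw [SimpleGraph.Walk.cons_isCycle_iff]
    refine ⟨hpath2, ?_⟩
    rw [SimpleGraph.Walk.edges_concat]
    simp only [List.concat_eq_append, List.mem_append, List.mem_singleton, not_or]
    refine ⟨fun h => haq (q.fst_mem_support_of_mem_edges h), fun h => ?_⟩
    rw [Sym2.eq_iff] at h
    rcases h with ⟨h, -⟩ | ⟨-, h⟩
    · exact hs'.ne h
    · exact hne h
  have hcl : 4 ≤ c.length := by
    simp [c, q]; omega
  obtain ⟨x, y, hx, hy, hadj, hnot⟩ := hG a c hc hcl
  have hedges : c.edges = s(a, s) :: (p.edges ++ [s(s', a)]) := by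
    simp [c, SimpleGraph.Walk.edges_concat, hqe]
  have hcsup : ∀ x ∈ c.support, x = a ∨ x ∈ p.support := by
    intro x hx
    simp only [c, SimpleGraph.Walk.support_cons, SimpleGraph.Walk.support_concat,
      List.mem_cons, List.mem_append, hqs] at hx
    simp at hx
    tauto
  have key : ∀ y ∈ p.support, G.Adj a y → s(a, y) ∈ c.edges := by
    intro y hy hadj
    have := hsup y hy
    rw [hedges]
    rcases this with h | rfl | h
    · exact absurd hadj (hT y h)
    · simp
    · simp only [Set.mem_singleton_iff] at h; subst h; simp [Sym2.eq_swap]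
  rcases hcsup x hx with rfl | hx'
  · rcases hcsup y hy with rfl | hy'
    · exact G.loopless.irrefl _ hadj
    · exact hnot (key y hy' hadj)
  · rcases hcsup y hy with rfl | hy'
    · exact hnot (Sym2.eq_swap ▸ key x hx' hadj.symm)
    · apply hnot
      rw [hedges]
      have := edge_of_shortest _ p hlen hx' hy' ⟨hadj, hsup _ hx', hsup _ hy'⟩
      simp [this]

def Simplicial {V : Type} (G : SimpleGraph V) (W : Finset V) (w : V) : Prop :=
  w ∈ W ∧ ∀ x ∈ W, ∀ y ∈ W, G.Adj w x → G.Adj w y → x ≠ y → G.Adj x y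

lemma dirac {n : ℕ} (G : SimpleGraph (Fin n)) (hG : IsChordalG G) (W : Finset (Fin n)) :
    ∀ a ∈ W, (∃ b ∈ W, b ≠ a ∧ ¬ G.Adj a b) → ∃ w, Simplicial G W w ∧ w ≠ a ∧ ¬ G.Adj a w := by
  classical
  induction W using Finset.strongInduction with
  | H W ih =>
  rintro a ha ⟨b, hb, hba, hab⟩
  let T : Set (Fin n) := {x | x ∈ W ∧ x ≠ a ∧ ¬ G.Adj a x}
  have hbT : b ∈ T := ⟨hb, hba, hab⟩
  let C : Finset (Fin n) := W.filter fun c => c ∈ T ∧ (restr G T).Reachable b c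
  let S : Finset (Fin n) := W.filter fun s => G.Adj a s ∧ ∃ c ∈ C, G.Adj s c
  have hC : ∀ c, c ∈ C ↔ c ∈ T ∧ (restr G T).Reachable b c := fun c => by
    simp only [C, Finset.mem_filter]
    exact ⟨fun h => h.2, fun h => ⟨h.1.1, h⟩⟩
  have hS : ∀ s, s ∈ S ↔ s ∈ W ∧ G.Adj a s ∧ ∃ c ∈ C, G.Adj s c := fun c => by simp [S]
  have hbC : b ∈ C := (hC b).2 ⟨hbT, .refl _⟩
  have hnb : ∀ c ∈ C, ∀ y ∈ W, G.Adj c y → y ∈ C ∪ S := by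
    intro c hc y hy hcy
    obtain ⟨hcT, hr⟩ := (hC c).1 hc
    rw [Finset.mem_union]
    by_cases hay : G.Adj a y
    · exact .inr ((hS y).2 ⟨hy, hay, c, hc, hcy.symm⟩)
    · have hya : y ≠ a := by rintro rfl; exact hcT.2.2 hcy.symm
      have hyT : y ∈ T := ⟨hy, hya, hay⟩
      exact .inl ((hC y).2 ⟨hyT, hr.trans (SimpleGraph.Adj.reachable ⟨hcy, hcT, hyT⟩)⟩)
  have hcl : ∀ s ∈ S, ∀ s' ∈ S, s ≠ s' → G.Adj s s' := by
    intro s hs s' hs' hne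
    obtain ⟨-, has, c, hc, hsc⟩ := (hS s).1 hs
    obtain ⟨-, has', c', hc', hsc'⟩ := (hS s').1 hs'
    refine sep_clique G hG a T (fun h => h.2.1 rfl) (fun x hx => hx.2.2) s s' hne has has' ?_
    obtain ⟨hcT, hr⟩ := (hC c).1 hc
    obtain ⟨hcT', hr'⟩ := (hC c').1 hc'
    have h1 : (restr G (T ∪ {s, s'})).Reachable c c' :=
      (hr.symm.trans hr').mono (restr_mono G Set.subset_union_left)
    have h2 : (restr G (T ∪ {s, s'})).Adj s c := ⟨hsc, by simp, .inl hcT⟩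
    have h3 : (restr G (T ∪ {s, s'})).Adj c' s' := ⟨hsc'.symm, .inl hcT', by simp⟩
    exact h2.reachable.trans (h1.trans h3.reachable)
  have haH : a ∉ C ∪ S := by
    rw [Finset.mem_union, not_or]
    exact ⟨fun h => ((hC a).1 h).1.2.1 rfl, fun h => G.loopless.irrefl _ ((hS a).1 h).2.1⟩
  have hHW : C ∪ S ⊂ W := by
    refine (Finset.ssubset_iff_of_subset ?_).2 ⟨a, ha, haH⟩
    exact Finset.union_subset (Finset.filter_subset _ _) (Finset.filter_subset _ _)
  -- it suffices to find a simplicial vertex of `C ∪ S` in `C`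
  suffices h : ∃ w ∈ C, Simplicial G (C ∪ S) w by
    obtain ⟨w, hwC, -, hw⟩ := h
    have hwT := ((hC w).1 hwC).1
    exact ⟨w, ⟨hwT.1, fun x hx y hy hwx hwy hxy =>
      hw x (hnb w hwC x hx hwx) y (hnb w hwC y hy hwy) hwx hwy hxy⟩, hwT.2.1, hwT.2.2⟩
  have fin : ∀ d ∈ C ∪ S, (∀ s ∈ S, s = d ∨ G.Adj d s) → (∃ e ∈ C ∪ S, e ≠ d ∧ ¬ G.Adj d e) →
      ∃ w ∈ C, Simplicial G (C ∪ S) w := by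
    intro d hd hds he
    obtain ⟨w, hw, hwd, hdw⟩ := ih _ hHW d hd he
    refine ⟨w, ?_, hw⟩
    rcases Finset.mem_union.1 hw.1 with h | h
    · exact h
    · rcases hds w h with h | h
      · exact absurd h hwd
      · exact absurd h hdw
  by_cases hun : ∃ s ∈ S, ∃ e ∈ C ∪ S, e ≠ s ∧ ¬ G.Adj s e
  · obtain ⟨s, hs, he⟩ := hun
    refine fin s (Finset.mem_union_right _ hs) (fun s' hs' => ?_) he
    by_cases h : s' = s
    · exact .inl h
    · exact .inr (hcl s hs s' hs' (Ne.symm h))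
  · push Not at hun
    by_cases hun2 : ∃ c ∈ C, ∃ e ∈ C ∪ S, e ≠ c ∧ ¬ G.Adj c e
    · obtain ⟨c, hc, he⟩ := hun2
      refine fin c (Finset.mem_union_left _ hc) (fun s' hs' => ?_) he
      by_cases h : s' = c
      · exact .inl h
      · exact .inr (hun s' hs' c (Finset.mem_union_left _ hc) (Ne.symm h)).symm
    · push Not at hun2
      refine ⟨b, hbC, Finset.mem_union_left _ hbC, fun x hx y hy _ _ hxy => ?_⟩
      rcases Finset.mem_union.1 hx with h | h
      · exact hun2 x h y hy hxy.symm
      · exact hun x h y hy hxy.symm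

lemma exists_simplicial {n : ℕ} (G : SimpleGraph (Fin n)) (hG : IsChordalG G)
    (W : Finset (Fin n)) (hW : W.Nonempty) : ∃ w, Simplicial G W w := by
  by_cases h : ∃ a ∈ W, ∃ b ∈ W, b ≠ a ∧ ¬ G.Adj a b
  · obtain ⟨a, ha, hb⟩ := h
    obtain ⟨w, hw, -⟩ := dirac G hG W a ha hb
    exact ⟨w, hw⟩
  · push Not at h
    obtain ⟨w, hw⟩ := hW
    exact ⟨w, hw, fun x hx y hy _ _ hxy => h x hx y hy hxy.symm⟩

section MonomialIdeals

open scoped Pointwise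

variable {n : ℕ} {K : Type} [Field K]

/-- exponent vectors supported on an independent subset of `W` -/
def Good (G : SimpleGraph (Fin n)) (W : Finset (Fin n)) (m : Fin n →₀ ℕ) : Prop :=
  m.support ⊆ W ∧ ∀ u ∈ m.support, ∀ v ∈ m.support, ¬ G.Adj u v

/-- edge ideal of the induced subgraph on `W`, plus the variables outside `W` -/
noncomputable def sr (K : Type) [Field K] (G : SimpleGraph (Fin n)) (W : Finset (Fin n)) :
    Ideal (MvPolynomial (Fin n) K) :=
  Ideal.span ((fun s => monomial s (1 : K)) '' {m | ¬ Good G W m})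

lemma mem_sr (G : SimpleGraph (Fin n)) (W : Finset (Fin n)) (f : MvPolynomial (Fin n) K) :
    f ∈ sr K G W ↔ ∀ m ∈ f.support, ¬ Good G W m := by
  rw [sr, mem_ideal_span_monomial_image]
  refine forall₂_congr fun m hm => ⟨?_, fun h => ⟨m, h, le_rfl⟩⟩
  rintro ⟨m', hm', hle⟩ ⟨h1, h2⟩
  have hs : m'.support ⊆ m.support := Finsupp.support_mono hle
  exact hm' ⟨hs.trans h1, fun u hu v hv => h2 u (hs hu) v (hs hv)⟩

lemma sr_univ (G : SimpleGraph (Fin n)) : sr K G Finset.univ = edgeIdeal n K G := by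
  have : edgeIdeal n K G = Ideal.span ((fun s => monomial s (1 : K)) ''
      {m | ∃ u v, G.Adj u v ∧ m = Finsupp.single u 1 + Finsupp.single v 1}) := by
    rw [edgeIdeal]
    congr 1
    ext f
    constructor
    · rintro ⟨u, v, h, rfl⟩
      exact ⟨_, ⟨u, v, h, rfl⟩, by simp [X, monomial_mul]⟩
    · rintro ⟨_, ⟨u, v, h, rfl⟩, rfl⟩
      exact ⟨u, v, h, by simp [X, monomial_mul]⟩
  rw [this]
  ext f
  rw [mem_sr, mem_ideal_span_monomial_image]
  refine forall₂_congr fun m hm => ?_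
  constructor
  · intro h
    simp only [Good, Finset.subset_univ, true_and] at h
    push Not at h
    obtain ⟨u, hu, v, hv, huv⟩ := h
    refine ⟨_, ⟨u, v, huv, rfl⟩, fun i => ?_⟩
    have hne := huv.ne
    rw [Finsupp.mem_support_iff] at hu hv
    simp only [Finsupp.add_apply, Finsupp.single_apply]
    split_ifs with h1 h2 h2
    · exact absurd (h1.trans h2.symm) hne
    · subst h1; omega
    · subst h2; omega
    · omega
  · rintro ⟨_, ⟨u, v, huv, rfl⟩, hle⟩ ⟨-, h⟩
    refine h u ?_ v ?_ huv
    · apply Finsupp.support_mono hle; simp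
    · apply Finsupp.support_mono hle; simp

/-- monomial primes -/
noncomputable def mp (K : Type) [Field K] (S : Finset (Fin n)) : Ideal (MvPolynomial (Fin n) K) :=
  Ideal.span (X '' (S : Set (Fin n)))

lemma mem_mp (S : Finset (Fin n)) (f : MvPolynomial (Fin n) K) :
    f ∈ mp K S ↔ ∀ m ∈ f.support, ∃ i ∈ S, m i ≠ 0 := by
  rw [mp, mem_ideal_span_X_image]; rfl

lemma mp_isPrime (S : Finset (Fin n)) : (mp K S).IsPrime := by
  classical
  let φ : MvPolynomial (Fin n) K →ₐ[K] MvPolynomial (Fin n) K :=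
    aeval fun i => if i ∈ S then 0 else X i
  have h1 : ∀ f, f - φ f ∈ mp K S := by
    intro f
    induction f using MvPolynomial.induction_on with
    | C a => simp [φ]
    | add p q hp hq =>
      rw [map_add, add_sub_add_comm]; exact add_mem hp hq
    | mul_X p i hp =>
      have : p * X i - φ (p * X i) = (p - φ p) * X i + φ p * (X i - φ (X i)) := by
        rw [map_mul]; ring
      rw [this]
      refine add_mem (Ideal.mul_mem_right _ _ hp) (Ideal.mul_mem_left _ _ ?_)
      by_cases hi : i ∈ S
      · simp only [φ, aeval_X, hi, if_true, sub_zero]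
        exact Ideal.subset_span ⟨i, hi, rfl⟩
      · simp [φ, hi]
  have h2 : mp K S = RingHom.ker φ := by
    apply le_antisymm
    · rw [mp, Ideal.span_le]
      rintro _ ⟨i, hi, rfl⟩
      have hi' : i ∈ S := hi
      simp [φ, hi', RingHom.mem_ker]
    · intro f hf
      have := h1 f
      rwa [RingHom.mem_ker.1 hf, sub_zero] at this
  rw [h2]
  exact RingHom.ker_isPrime _

lemma mIdeal_eq : mIdeal n K = mp K Finset.univ := by
  simp [mIdeal, mp]

lemma X_mem_mp (S : Finset (Fin n)) (i : Fin n) : (X i : MvPolynomial (Fin n) K) ∈ mp K S ↔ i ∈ S := by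
  classical
  rw [mem_mp]
  simp [support_X, Finsupp.single_apply]

/-- monomial primes as points of the spectrum -/
noncomputable def pt (K : Type) [Field K] (S : Finset (Fin n)) :
    PrimeSpectrum (MvPolynomial (Fin n) K) := ⟨mp K S, mp_isPrime S⟩

lemma pt_strictMono : StrictMono (pt K : Finset (Fin n) → _) := by
  intro S T h
  have : mp K S < mp K T := by
    obtain ⟨h1, i, hi, hi'⟩ := (Finset.ssubset_iff_exists_cons_subset.1 h).elim
      fun i ⟨h, h'⟩ => (⟨Finset.subset_iff.2 fun x hx => h' (by simp [hx]), i,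
        h' (by simp), h⟩ : S ⊆ T ∧ ∃ i, i ∈ T ∧ i ∉ S)
    refine SetLike.lt_iff_le_and_exists.2 ⟨Ideal.span_mono (Set.image_mono (by exact_mod_cast h1)),
      X i, (X_mem_mp T i).2 hi, fun hh => hi' ((X_mem_mp S i).1 hh)⟩
  exact this

lemma height_pt (S : Finset (Fin n)) : (S.card : ℕ∞) ≤ Order.height (pt K S) := by
  classical
  induction S using Finset.induction_on with
  | empty => simp
  | insert a s ha ih =>
    rw [Finset.card_insert_of_notMem ha]
    push_cast
    exact (add_le_add_left ih 1).trans (Order.height_add_one_le (pt_strictMono (Finset.ssubset_insert ha)))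

lemma coheight_pt (S : Finset (Fin n)) : ((n - S.card : ℕ) : ℕ∞) ≤ Order.coheight (pt K S) := by
  classical
  suffices h : ∀ T : Finset (Fin n), (T.card : ℕ∞) ≤ Order.coheight (pt K Tᶜ) by
    have := h Sᶜ
    rwa [compl_compl, Finset.card_compl, Fintype.card_fin] at this
  intro T
  induction T using Finset.induction_on with
  | empty => simp
  | insert a s ha ih =>
    rw [Finset.card_insert_of_notMem ha]
    push_cast
    refine (add_le_add_left ih 1).trans (Order.coheight_add_one_le (pt_strictMono ?_))
    exact Finset.compl_ssubset_compl.2 (Finset.ssubset_insert ha)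

lemma height_add_coheight_le (p : PrimeSpectrum (MvPolynomial (Fin n) K)) :
    Order.height p + Order.coheight p ≤ (n : ℕ∞) := by
  have h1 : ringKrullDim (MvPolynomial (Fin n) K) = n := by
    rw [MvPolynomial.ringKrullDim_of_isNoetherianRing]; simp
  rw [ringKrullDim, Order.krullDim_eq_iSup_height_add_coheight_of_nonempty] at h1
  have h2 : (⨆ a : PrimeSpectrum (MvPolynomial (Fin n) K), Order.height a + Order.coheight a) =
    (n : ℕ∞) := by exact_mod_cast h1
  rw [← h2]
  exact le_iSup (fun a => Order.height a + Order.coheight a) p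

lemma ringKrullDim_quot_prime {A : Type} [CommRing A] (p : PrimeSpectrum A) :
    ringKrullDim (A ⧸ p.asIdeal) = (Order.coheight p : WithBot ℕ∞) := by
  rw [ringKrullDim_quotient, Order.coheight_eq_krullDim_Ici]
  have : PrimeSpectrum.zeroLocus (p.asIdeal : Set A) = Set.Ici p := by
    ext q; rfl
  rw [this]

lemma sr_le_mIdeal (G : SimpleGraph (Fin n)) (W : Finset (Fin n)) : sr K G W ≤ mIdeal n K := by
  intro f hf
  rw [mIdeal_eq, mem_mp]
  rw [mem_sr] at hf
  intro m hm
  by_contra! h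
  have : m = 0 := by ext i; exact h i (Finset.mem_univ i)
  exact hf m hm ⟨by simp [this], by simp [this]⟩

lemma smul_top_lt {A : Type} [CommRing A] (J I : Ideal A) (hJ : J ≠ ⊤) (hI : I ≤ J) :
    J • (⊤ : Submodule A (A ⧸ I)) < ⊤ := by
  rw [lt_top_iff_ne_top]
  intro h
  apply hJ
  rw [Ideal.eq_top_iff_one]
  have h1 : (Ideal.Quotient.mk I 1) ∈ J • (⊤ : Submodule A (A ⧸ I)) := by
    rw [h]; exact Submodule.mem_top
  have h2 : J • (⊤ : Submodule A (A ⧸ I)) ≤ Submodule.map (Submodule.mkQ I) J := by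
    rw [Submodule.smul_le]
    intro r hr x _
    obtain ⟨y, rfl⟩ := Submodule.mkQ_surjective I x
    exact ⟨r * y, J.mul_mem_right _ hr, by rw [← smul_eq_mul, map_smul]⟩
  obtain ⟨y, hy, hy'⟩ := h2 h1
  have h3 : y - 1 ∈ I := (Submodule.Quotient.eq I).1 hy'
  have := J.sub_mem hy (hI h3)
  simpa using this

lemma smul_top_lt_sr (G : SimpleGraph (Fin n)) (W : Finset (Fin n)) :
    mIdeal n K • (⊤ : Submodule (MvPolynomial (Fin n) K) (MvPolynomial (Fin n) K ⧸ sr K G W)) < ⊤ :=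
  smul_top_lt _ _ (by rw [mIdeal_eq]; exact (mp_isPrime _).ne_top) (sr_le_mIdeal G W)

lemma sr_colon (G : SimpleGraph (Fin n)) [DecidableRel G.Adj] (W : Finset (Fin n)) (u : Fin n)
    (hu : u ∈ W) (f : MvPolynomial (Fin n) K) :
    X u * f ∈ sr K G W ↔ f ∈ sr K G (W.filter fun x => ¬ G.Adj u x) := by
  classical
  rw [mem_sr, mem_sr, support_X_mul]
  simp only [Finset.mem_map, addLeftEmbedding_apply, forall_exists_index, and_imp,
    forall_apply_eq_imp_iff₂]
  refine forall₂_congr fun m hm => not_congr ?_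
  have hs : (Finsupp.single u 1 + m).support = insert u m.support := by
    ext i
    by_cases h : u = i <;> simp [Finsupp.single_apply, h, eq_comm]
  simp only [Good, hs, Finset.insert_subset_iff, Finset.subset_iff, Finset.mem_filter,
    Finset.mem_insert, forall_eq_or_imp, G.irrefl, not_false_eq_true, true_and]
  constructor
  · rintro ⟨⟨-, h1⟩, h2, h3⟩
    exact ⟨fun x hx => ⟨h1 x hx, h2 x hx⟩, fun x hx => (h3 x hx).2⟩
  · rintro ⟨h1, h2⟩
    exact ⟨⟨hu, fun x hx => (h1 hx).1⟩, fun x hx => (h1 hx).2,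
      fun x hx => ⟨fun h => (h1 hx).2 h.symm, h2 x hx⟩⟩

lemma sr_mono (G : SimpleGraph (Fin n)) {W W' : Finset (Fin n)} (h : W' ⊆ W) :
    sr K G W ≤ sr K G W' := by
  intro f hf
  rw [mem_sr] at hf ⊢
  exact fun m hm hg => hf m hm ⟨hg.1.trans h, hg.2⟩

lemma sr_erase (G : SimpleGraph (Fin n)) (W : Finset (Fin n)) (u : Fin n) :
    sr K G (W.erase u) = Ideal.span {X u} ⊔ sr K G W := by
  apply le_antisymm
  · rw [sr, Ideal.span_le]
    rintro _ ⟨m, hm, rfl⟩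
    by_cases hu : u ∈ m.support
    · refine Ideal.mem_sup_left (Ideal.mem_span_singleton.2 ?_)
      rw [X_dvd_monomial]
      right
      simpa using hu
    · refine Ideal.mem_sup_right (Ideal.subset_span ⟨m, ?_, rfl⟩)
      intro hg
      exact hm ⟨Finset.subset_erase.2 ⟨hg.1, hu⟩, hg.2⟩
  · refine sup_le ?_ (sr_mono G (Finset.erase_subset _ _))
    rw [Ideal.span_singleton_le_iff_mem, mem_sr]
    intro m hm hg
    rw [support_X, Finset.mem_singleton] at hm
    subst hm
    have := hg.1 (show u ∈ _ by simp)
    simp at this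

/-- multiplication by `X u` -/
noncomputable def mulMap (G : SimpleGraph (Fin n)) [DecidableRel G.Adj] (W : Finset (Fin n))
    (u : Fin n) (hu : u ∈ W) :
    (MvPolynomial (Fin n) K ⧸ sr K G (W.filter fun x => ¬ G.Adj u x)) →ₗ[MvPolynomial (Fin n) K]
      (MvPolynomial (Fin n) K ⧸ sr K G W) :=
  Submodule.mapQ _ _ (LinearMap.lsmul _ _ (X u)) fun f hf => (sr_colon G W u hu f).2 hf

lemma mulMap_injective (G : SimpleGraph (Fin n)) [DecidableRel G.Adj] (W : Finset (Fin n))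
    (u : Fin n) (hu : u ∈ W) : Function.Injective (mulMap (K := K) G W u hu) := by
  rw [injective_iff_map_eq_zero]
  intro x hx
  obtain ⟨f, rfl⟩ := Submodule.mkQ_surjective _ x
  have h1 : Submodule.Quotient.mk (p := sr K G W) (X u * f) = 0 := hx
  rw [Submodule.Quotient.mk_eq_zero, sr_colon G W u hu] at h1
  exact (Submodule.Quotient.mk_eq_zero _).2 h1

/-- restriction to the deletion of `u` -/
noncomputable def delMap (K : Type) [Field K] (G : SimpleGraph (Fin n)) (W : Finset (Fin n)) (u : Fin n) :
    (MvPolynomial (Fin n) K ⧸ sr K G W) →ₗ[MvPolynomial (Fin n) K]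
      (MvPolynomial (Fin n) K ⧸ sr K G (W.erase u)) :=
  Submodule.mapQ _ _ LinearMap.id (sr_mono G (Finset.erase_subset _ _))

lemma delMap_surjective (G : SimpleGraph (Fin n)) (W : Finset (Fin n))
    (u : Fin n) : Function.Surjective (delMap K G W u) := by
  intro x
  obtain ⟨f, rfl⟩ := Submodule.mkQ_surjective _ x
  exact ⟨Submodule.Quotient.mk f, rfl⟩

lemma delMap_ker (G : SimpleGraph (Fin n)) (W : Finset (Fin n))
    (u : Fin n) (f : MvPolynomial (Fin n) K) :
    delMap K G W u (Submodule.Quotient.mk f) = 0 ↔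
    ∃ g : MvPolynomial (Fin n) K, Submodule.Quotient.mk (p := sr K G W) (X u * g) =
      Submodule.Quotient.mk f := by
  have : delMap K G W u (Submodule.Quotient.mk f) = Submodule.Quotient.mk f := rfl
  rw [this, Submodule.Quotient.mk_eq_zero, sr_erase, Submodule.mem_sup]
  constructor
  · rintro ⟨y, hy, z, hz, rfl⟩
    obtain ⟨g, rfl⟩ := Ideal.mem_span_singleton.1 hy
    refine ⟨g, (Submodule.Quotient.eq _).2 ?_⟩
    simpa using hz
  · rintro ⟨g, hg⟩
    have := (Submodule.Quotient.eq _).1 hg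
    exact ⟨X u * g, Ideal.mem_span_singleton.2 ⟨g, rfl⟩, f - X u * g, by
      rw [← neg_sub]; exact neg_mem this, by ring⟩

lemma mulMap_delMap_exact (G : SimpleGraph (Fin n)) [DecidableRel G.Adj] (W : Finset (Fin n))
    (u : Fin n) (hu : u ∈ W) : Function.Exact (mulMap (K := K) G W u hu) (delMap K G W u) := by
  intro x
  obtain ⟨f, rfl⟩ := Submodule.mkQ_surjective _ x
  refine (delMap_ker G W u f).trans ?_
  constructor
  · rintro ⟨g, hg⟩
    exact ⟨Submodule.Quotient.mk g, hg⟩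
  · rintro ⟨y, hy⟩
    obtain ⟨g, rfl⟩ := Submodule.mkQ_surjective _ y
    exact ⟨g, hy⟩

/-- maximal independent subsets of `W` -/
def MaxInd (G : SimpleGraph (Fin n)) (W F : Finset (Fin n)) : Prop :=
  F ⊆ W ∧ (∀ u ∈ F, ∀ v ∈ F, ¬ G.Adj u v) ∧ ∀ v ∈ W, v ∉ F → ∃ u ∈ F, G.Adj v u

lemma exists_maxInd (G : SimpleGraph (Fin n)) (W A : Finset (Fin n)) (hA : A ⊆ W)
    (hA' : ∀ u ∈ A, ∀ v ∈ A, ¬ G.Adj u v) : ∃ F, A ⊆ F ∧ MaxInd G W F := by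
  classical
  let P : Finset (Fin n) → Prop := fun F => F ⊆ W ∧ ∀ u ∈ F, ∀ v ∈ F, ¬ G.Adj u v
  obtain ⟨F, hAF, hF⟩ := (Set.toFinite {F | P F}).exists_le_maximal (show A ∈ {F | P F} from ⟨hA, hA'⟩)
  refine ⟨F, hAF, hF.prop.1, hF.prop.2, fun v hv hvF => ?_⟩
  by_contra! h
  have h1 : P (insert v F) := by
    refine ⟨Finset.insert_subset hv hF.prop.1, ?_⟩
    simp only [Finset.mem_insert, forall_eq_or_imp, G.irrefl, not_false_eq_true, true_and]
    exact ⟨h, fun a ha => ⟨fun h' => h a ha h'.symm, hF.prop.2 a ha⟩⟩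
  exact hvF (hF.le_of_ge h1 (Finset.subset_insert _ _) (Finset.mem_insert_self _ _))

lemma lower_bound (G : SimpleGraph (Fin n)) (hG : IsChordalG G) (W : Finset (Fin n)) :
    ∀ t : ℕ, (∀ F, MaxInd G W F → t ≤ F.card) →
      HasDepthGE (mIdeal n K) t (MvPolynomial (Fin n) K ⧸ sr K G W) := by
  classical
  induction W using Finset.strongInduction with
  | H W ih =>
  intro t ht
  rcases W.eq_empty_or_nonempty with rfl | hne
  · have h0 : t = 0 := by
      have := ht ∅ ⟨by simp, by simp, by simp⟩
      simpa using this
    subst h0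
    refine ⟨[], rfl, by simp, ?_⟩
    have : Nontrivial (MvPolynomial (Fin n) K ⧸ sr K G ∅) :=
      (Submodule.nontrivial_iff _).mp (nontrivial_of_lt _ _ (smul_top_lt_sr G ∅))
    exact RingTheory.Sequence.IsRegular.nil _ _
  obtain ⟨v, hvW, hv⟩ := exists_simplicial G hG W hne
  by_cases hiso : ∃ u ∈ W, G.Adj v u
  · obtain ⟨u, huW, hvu⟩ := hiso
    refine hasDepthGE_of_ses (mIdeal n K) t (smul_top_lt_sr G _) (smul_top_lt_sr G _)
      (smul_top_lt_sr G _) (mulMap G W u huW) (delMap K G W u) (mulMap_injective G W u huW)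
      (delMap_surjective G W u) (mulMap_delMap_exact G W u huW) ?_ ?_
    · refine ih _ ?_ t fun F hF => ht F ?_
      · refine (Finset.ssubset_iff_of_subset (Finset.filter_subset _ _)).2 ⟨v, hvW, ?_⟩
        simp [hvu.symm]
      · have huF : u ∈ F := by
          by_contra h
          obtain ⟨x, hx, hux⟩ := hF.2.2 u (by simp [huW]) h
          exact (Finset.mem_filter.1 (hF.1 hx)).2 hux
        refine ⟨hF.1.trans (Finset.filter_subset _ _), hF.2.1, fun x hx hxF => ?_⟩
        by_cases hux : G.Adj u x
        · exact ⟨u, huF, hux.symm⟩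
        · exact hF.2.2 x (by simp [hx, hux]) hxF
    · refine ih _ (Finset.erase_ssubset huW) t fun F hF => ht F ?_
      refine ⟨hF.1.trans (Finset.erase_subset _ _), hF.2.1, fun x hx hxF => ?_⟩
      by_cases hxu : x = u
      · subst hxu
        by_cases hvF : v ∈ F
        · exact ⟨v, hvF, hvu.symm⟩
        · obtain ⟨y, hy, hvy⟩ := hF.2.2 v (by simp [hvW, hvu.ne]) hvF
          refine ⟨y, hy, hv x hx y ((Finset.erase_subset _ _) (hF.1 hy)) hvu hvy ?_⟩
          rintro rfl
          exact hxF hy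
      · exact hF.2.2 x (by simp [hx, hxu]) hxF
  · push Not at hiso
    have hfil : (W.filter fun x => ¬ G.Adj v x) = W := Finset.filter_true_of_mem hiso
    rcases t with _ | t
    · refine ⟨[], rfl, by simp, ?_⟩
      have : Nontrivial (MvPolynomial (Fin n) K ⧸ sr K G W) :=
        (Submodule.nontrivial_iff _).mp (nontrivial_of_lt _ _ (smul_top_lt_sr G W))
      exact RingTheory.Sequence.IsRegular.nil _ _
    · have hker : (X v : MvPolynomial (Fin n) K) •
          (⊤ : Submodule (MvPolynomial (Fin n) K) (MvPolynomial (Fin n) K ⧸ sr K G W)) =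
          LinearMap.ker (delMap K G W v) := by
        ext x
        obtain ⟨f, rfl⟩ := Submodule.mkQ_surjective _ x
        rw [LinearMap.mem_ker]
        refine Iff.trans ?_ (delMap_ker G W v f).symm
        constructor
        · rintro ⟨y, -, hy⟩
          obtain ⟨g, rfl⟩ := Submodule.mkQ_surjective _ y
          exact ⟨g, hy⟩
        · rintro ⟨g, hg⟩
          exact ⟨Submodule.Quotient.mk g, trivial, hg⟩
      refine hasDepthGE_cons (mIdeal n K) t (X v) (Ideal.subset_span ⟨v, rfl⟩) ?_
        ((Submodule.quotEquivOfEq _ _ hker).trans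
          (LinearMap.quotKerEquivOfSurjective _ (delMap_surjective G W v)))
        (ih _ (Finset.erase_ssubset hvW) t fun F hF => ?_)
      · rw [isSMulRegular_quotient_iff_mem_of_smul_mem]
        intro f hf
        rw [smul_eq_mul, sr_colon G W v hvW, hfil] at hf
        exact hf
      · have hvF : v ∉ F := fun h => by simpa using hF.1 h
        have := ht (insert v F) ⟨Finset.insert_subset hvW (hF.1.trans (Finset.erase_subset _ _)), ?_, ?_⟩
        · rw [Finset.card_insert_of_notMem hvF] at this
          omega
        · have hvx : ∀ x ∈ F, ¬ G.Adj v x := fun x hx => hiso x (Finset.erase_subset _ _ (hF.1 hx))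
          simp only [Finset.mem_insert, forall_eq_or_imp, G.irrefl, not_false_eq_true, true_and]
          exact ⟨hvx, fun a ha => ⟨fun h' => hvx a ha h'.symm, hF.2.1 a ha⟩⟩
        · intro x hx hxF
          rw [Finset.mem_insert, not_or] at hxF
          obtain ⟨y, hy, hxy⟩ := hF.2.2 x (by simp [hx, hxF.1]) hxF.2
          exact ⟨y, Finset.mem_insert_of_mem hy, hxy⟩

lemma edgeIdeal_le_mp (G : SimpleGraph (Fin n)) (F : Finset (Fin n))
    (hF : MaxInd G Finset.univ F) : edgeIdeal n K G ≤ mp K Fᶜ := by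
  rw [edgeIdeal, Ideal.span_le]
  rintro _ ⟨u, v, huv, rfl⟩
  by_cases hu : u ∈ F
  · have hv : v ∉ F := fun hv => hF.2.1 u hu v hv huv
    exact Ideal.mul_mem_left _ _ ((X_mem_mp _ _).2 (by simpa using hv))
  · exact Ideal.mul_mem_right _ _ ((X_mem_mp _ _).2 (by simpa using hu))

lemma mp_mem_ass (G : SimpleGraph (Fin n)) (F : Finset (Fin n))
    (hF : MaxInd G Finset.univ F) :
    mp K Fᶜ ∈ associatedPrimes (MvPolynomial (Fin n) K) (MvPolynomial (Fin n) K ⧸ edgeIdeal n K G) := by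
  refine isAssociatedPrime_iff.2 ⟨mp_isPrime _, Submodule.Quotient.mk (∏ i ∈ F, X i), ?_⟩
  have hcol : ∀ a : MvPolynomial (Fin n) K, a ∈ (⊥ : Submodule (MvPolynomial (Fin n) K)
      (MvPolynomial (Fin n) K ⧸ edgeIdeal n K G)).colon {Submodule.Quotient.mk (∏ i ∈ F, X i)} ↔
      a * ∏ i ∈ F, X i ∈ edgeIdeal n K G := fun a => by
    rw [Submodule.mem_colon_singleton, Submodule.mem_bot, ← Submodule.Quotient.mk_smul,
      Submodule.Quotient.mk_eq_zero, smul_eq_mul]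
  apply le_antisymm
  · rw [mp, Ideal.span_le]
    rintro _ ⟨j, hj, rfl⟩
    have hj' : j ∉ F := by simpa using hj
    obtain ⟨u, hu, hju⟩ := hF.2.2 j (Finset.mem_univ _) hj'
    refine (hcol _).2 ?_
    classical
    rw [← Finset.mul_prod_erase F _ hu, ← mul_assoc]
    exact Ideal.mul_mem_right _ _ (Ideal.subset_span ⟨j, u, hju, rfl⟩)
  · intro a ha
    have h1 := edgeIdeal_le_mp G F hF ((hcol a).1 ha)
    refine ((mp_isPrime _).mem_or_mem h1).resolve_right fun h => ?_
    have := mp_isPrime (K := K) Fᶜ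
    obtain ⟨i, hi, hi'⟩ := Ideal.IsPrime.prod_mem_iff.1 h
    rw [X_mem_mp] at hi'
    simp [hi] at hi'

lemma ass_le_mIdeal (G : SimpleGraph (Fin n)) (p : Ideal (MvPolynomial (Fin n) K))
    (hp : p ∈ associatedPrimes (MvPolynomial (Fin n) K)
      (MvPolynomial (Fin n) K ⧸ edgeIdeal n K G)) : p ≤ mIdeal n K := by
  obtain ⟨hpp, z, hz⟩ := isAssociatedPrime_iff.1 hp
  obtain ⟨f, rfl⟩ := Submodule.mkQ_surjective _ z
  have hz' : ∀ a, a ∈ p ↔ a * f ∈ edgeIdeal n K G := fun a => by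
    rw [hz, Submodule.mem_colon_singleton, Submodule.mem_bot, ← map_smul, Submodule.mkQ_apply,
      Submodule.Quotient.mk_eq_zero, smul_eq_mul]
  have hf : f ∉ edgeIdeal n K G := fun h =>
    hpp.ne_top ((Ideal.eq_top_iff_one _).2 ((hz' 1).2 (by simpa using h)))
  rw [← sr_univ, mem_sr] at hf
  push Not at hf
  obtain ⟨m, hm, hg⟩ := hf
  obtain ⟨F, hmF, hF⟩ := exists_maxInd G Finset.univ m.support hg.1 hg.2
  have hfF : f ∉ mp K Fᶜ := fun h => by
    obtain ⟨i, hi, hi'⟩ := (mem_mp _ _).1 h m hm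
    exact (Finset.mem_compl.1 hi) (hmF (Finsupp.mem_support_iff.2 hi'))
  intro a ha
  have h1 := edgeIdeal_le_mp G F hF ((hz' a).1 ha)
  have h2 := ((mp_isPrime _).mem_or_mem h1).resolve_right hfF
  rw [mIdeal_eq]
  exact Ideal.span_mono (Set.image_mono (by simp)) h2

end MonomialIdeals

/-- For the edge ideal `I` of a chordal graph `G`,
`depth R/I = min {dim R/𝔭 : 𝔭 ∈ ass(I)} = n - bigh(I)`. -/
theorem statement_15 (n : ℕ) (K : Type) [Field K] (G : SimpleGraph (Fin n))
    (hG : IsChordalG G) :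
    (depth (mIdeal n K) (MvPolynomial (Fin n) K ⧸ edgeIdeal n K G) : WithBot ℕ∞) =
        sInf {d : WithBot ℕ∞ | ∃ 𝔭 ∈ associatedPrimes (MvPolynomial (Fin n) K)
            (MvPolynomial (Fin n) K ⧸ edgeIdeal n K G), d = ringKrullDim (MvPolynomial (Fin n) K ⧸ 𝔭)} ∧
    depth (mIdeal n K) (MvPolynomial (Fin n) K ⧸ edgeIdeal n K G) =
        (n : ℕ∞) - bigh (edgeIdeal n K G) := by
  classical
  have hJ : (mIdeal n K).IsPrime := by rw [mIdeal_eq]; exact mp_isPrime _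
  obtain ⟨F, hF, hmin⟩ : ∃ F, MaxInd G Finset.univ F ∧
      ∀ F', MaxInd G Finset.univ F' → F.card ≤ F'.card := by
    obtain ⟨F₀, -, hF₀⟩ := exists_maxInd G Finset.univ ∅ (by simp) (by simp)
    exact Set.exists_min_image {F | MaxInd G Finset.univ F} Finset.card (Set.toFinite _) ⟨F₀, hF₀⟩
  set t := F.card with ht
  have htn : t ≤ n := by simpa using F.card_le_univ
  have hlow : HasDepthGE (mIdeal n K) t (MvPolynomial (Fin n) K ⧸ edgeIdeal n K G) := by
    have := lower_bound (K := K) G hG Finset.univ t hmin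
    rwa [sr_univ] at this
  obtain ⟨rs, hrl, hrm, hrr⟩ := hlow
  have hco : ∀ p : PrimeSpectrum (MvPolynomial (Fin n) K), p.asIdeal ∈
      associatedPrimes (MvPolynomial (Fin n) K) (MvPolynomial (Fin n) K ⧸ edgeIdeal n K G) →
      (t : ℕ∞) ≤ Order.coheight p := fun p hp => by
    have := length_le_coheight (mIdeal n K) rs hrm _ p hp (ass_le_mIdeal G _ hp)
      hrr.toIsWeaklyRegular
    rwa [hrl] at this
  have hht : ∀ p : PrimeSpectrum (MvPolynomial (Fin n) K), p.asIdeal ∈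
      associatedPrimes (MvPolynomial (Fin n) K) (MvPolynomial (Fin n) K ⧸ edgeIdeal n K G) →
      Order.height p ≤ ((n - t : ℕ) : ℕ∞) := fun p hp => by
    have h1 := height_add_coheight_le p
    have h2 := (add_le_add_right (hco p hp) (Order.height p)).trans h1
    have h3 : ((n - t : ℕ) : ℕ∞) + t = n := by exact_mod_cast Nat.sub_add_cancel htn
    rw [← h3] at h2
    exact (ENat.add_le_add_iff_right (ENat.natCast_ne_top t)).1 h2
  have hass := mp_mem_ass (K := K) G F hF
  have hcard : (Fᶜ).card = n - t := by rw [Finset.card_compl, Fintype.card_fin]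
  have hcoF : Order.coheight (pt K Fᶜ) = t := by
    refine le_antisymm ?_ (hco _ hass)
    have h1 := height_add_coheight_le (pt K Fᶜ)
    have h2 := height_pt (K := K) Fᶜ
    rw [hcard] at h2
    have h4 := (add_le_add_left h2 (Order.coheight (pt K Fᶜ))).trans h1
    have h3 : ((n - t : ℕ) : ℕ∞) + t = n := by exact_mod_cast Nat.sub_add_cancel htn
    rw [← h3] at h4
    exact (ENat.add_le_add_iff_left (ENat.natCast_ne_top _)).1 h4
  have hhtF : Order.height (pt K Fᶜ) = ((n - t : ℕ) : ℕ∞) := by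
    refine le_antisymm (hht _ hass) ?_
    rw [← hcard]
    exact height_pt _
  have hdepth : depth (mIdeal n K) (MvPolynomial (Fin n) K ⧸ edgeIdeal n K G) = t := by
    apply le_antisymm
    · refine sSup_le ?_
      rintro _ ⟨rs', rfl, hm', hr'⟩
      have := length_le_coheight (mIdeal n K) rs' hm' _ (pt K Fᶜ) hass (ass_le_mIdeal G _ hass)
        hr'.toIsWeaklyRegular
      rwa [hcoF] at this
    · exact le_sSup ⟨rs, by rw [hrl], hrm, hrr⟩
  have hbigh : bigh (edgeIdeal n K G) = ((n - t : ℕ) : ℕ∞) := by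
    apply le_antisymm
    · refine iSup₂_le fun p hp => iSup_le fun h => hht ⟨p, h⟩ hp
    · rw [← hhtF]
      refine le_trans ?_ (le_iSup₂ (f := fun p _ => htP p) (mp K Fᶜ) hass)
      exact le_iSup (fun h : (mp K Fᶜ).IsPrime =>
        Order.height (⟨mp K Fᶜ, h⟩ : PrimeSpectrum (MvPolynomial (Fin n) K))) (mp_isPrime _)
  rw [hdepth, hbigh]
  constructor
  · apply le_antisymm
    · refine le_sInf ?_
      rintro _ ⟨p, hp, rfl⟩
      have := hco ⟨p, hp.1⟩ hp
      rw [ringKrullDim_quot_prime ⟨p, hp.1⟩]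
      exact WithBot.coe_le_coe.2 this
    · refine sInf_le ⟨mp K Fᶜ, hass, ?_⟩
      rw [← hcoF]
      exact (ringKrullDim_quot_prime (pt K Fᶜ)).symm
  · have : t = n - (n - t) := by omega
    exact_mod_cast this

end Paper
end
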